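/- With variables x, y, z, the system of three word equations x² = y, y² = z, z² = x is an independent system, with solutions taken in the free semigroup on two letters. Hence is₊(3) ≥ 3. -/

import Mathlib

/-- A semigroup morphism `h` from the free semigroup on the variables `Ξ` to a
semigroup `S` is a solution of the equation `E = (U, V)` if `h U = h V`. -/
def IsSolutionS {Ξ S : Type*} [Semigroup S] (h : FreeSemigroup Ξ →ₙ* S)
    (E : FreeSemigroup Ξ × FreeSemigroup Ξ) : Prop :=
  h E.1 = h E.2

/-- The variable `x`. -/
def x : FreeSemigroup (Fin 3) := FreeSemigroup.of 0
/-- The variable `y`. -/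
def y : FreeSemigroup (Fin 3) := FreeSemigroup.of 1
/-- The variable `z`. -/
def z : FreeSemigroup (Fin 3) := FreeSemigroup.of 2

/-- The system of equations `x² = y, y² = z, z² = x`. -/
def system : Fin 3 → FreeSemigroup (Fin 3) × FreeSemigroup (Fin 3) :=
  ![(x * x, y), (y * y, z), (z * z, x)]

/-- The system of the three word equations `x² = y, y² = z, z² = x` is independent,
with solutions taken in the free semigroup on two letters. Hence is₊(3) ≥ 3. -/
theorem system_independent :
    ∀ i : Fin 3, ∃ h : FreeSemigroup (Fin 3) →ₙ* FreeSemigroup (Fin 2),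
      (∀ j : Fin 3, j ≠ i → IsSolutionS h (system j)) ∧ ¬ IsSolutionS h (system i) := by
  have key : ∀ u v w : FreeSemigroup (Fin 2),
      ∃ h : FreeSemigroup (Fin 3) →ₙ* FreeSemigroup (Fin 2), h x = u ∧ h y = v ∧ h z = w :=
    fun u v w => ⟨FreeSemigroup.lift ![u, v, w], by simp [x, y, z]⟩
  let a : FreeSemigroup (Fin 2) := FreeSemigroup.of 0
  -- the two sides of the omitted equation have lengths 8 and 1
  have ne : a * a * (a * a) * (a * a * (a * a)) ≠ a := fun e => by
    have := congrArg FreeSemigroup.length e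
    simp [a] at this
  intro i
  fin_cases i
  · obtain ⟨h, hx, hy, hz⟩ := key (a * a * (a * a)) a (a * a)
    refine ⟨h, fun j hj => ?_, ?_⟩
    · fin_cases j <;> simp_all [IsSolutionS, system]
    · simpa [IsSolutionS, system, hx, hy, hz] using ne
  · obtain ⟨h, hx, hy, hz⟩ := key (a * a) (a * a * (a * a)) a
    refine ⟨h, fun j hj => ?_, ?_⟩
    · fin_cases j <;> simp_all [IsSolutionS, system]
    · simpa [IsSolutionS, system, hx, hy, hz] using ne
  · obtain ⟨h, hx, hy, hz⟩ := key a (a * a) (a * a * (a * a))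
    refine ⟨h, fun j hj => ?_, ?_⟩
    · fin_cases j <;> simp_all [IsSolutionS, system]
    · simpa [IsSolutionS, system, hx, hy, hz] using ne
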